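/- Let Γ be a finitely generated self-simulable group with decidable word problem. Then there exists a nonempty Γ-subshift of finite type X which is strongly aperiodic, i.e. the shift action of Γ on X is free: if g·x = x for some x ∈ X then g = 1. -/

import Mathlib

open scoped Pointwise

namespace SelfSim

/-- The left shift action of a group `G` on the full shift `G → A`:
`(g · x)(h) = x (g⁻¹ h)`. -/
def shift {G A : Type*} [Group G] (g : G) (x : G → A) : G → A := fun h => x (g⁻¹ * h)

/-- A `G`-subshift: a closed, shift-invariant subset of the full shift `G → A`
(`A` carrying its topology, `G → A` the product topology). -/
def IsSubshift {G A : Type*} [Group G] [TopologicalSpace A] (X : Set (G → A)) : Prop :=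
  IsClosed X ∧ ∀ (g : G) (x : G → A), x ∈ X → shift g x ∈ X

/-- A subshift of finite type: there are a finite set `F ⊆ G` and a set `𝓛` of patterns
on `F` such that `x ∈ X` iff every translate of `x` restricted to `F` lies in `𝓛`. -/
def IsSFT {G A : Type*} [Group G] (X : Set (G → A)) : Prop :=
  ∃ (F : Finset G) (L : Set (↥F → A)),
    ∀ x : G → A, x ∈ X ↔ ∀ g : G, (fun h : ↥F => x (g * (h : G))) ∈ L

/-- `φ` is a topological factor map from the shift action on `Z ⊆ G → A` onto the
action `act` of `G` on `Y ⊆ β`: continuous on `Z`, mapping `Z` into and onto `Y`,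
and equivariant. -/
def IsFactorMapOnto {G A β : Type*} [Group G] [TopologicalSpace A] [TopologicalSpace β]
    (Z : Set (G → A)) (φ : (G → A) → β) (act : G → β → β) (Y : Set β) : Prop :=
  ContinuousOn φ Z ∧ Set.MapsTo φ Z Y ∧ Set.SurjOn φ Z Y ∧
    ∀ (g : G) (x : G → A), x ∈ Z → φ (shift g x) = act g (φ x)

/-- A sofic subshift: a topological factor of some subshift of finite type
(over some finite alphabet, which we may take to be `Fin k`). -/
def IsSofic {G A : Type*} [Group G] [TopologicalSpace A] (Y : Set (G → A)) : Prop :=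
  ∃ (k : ℕ) (Z : Set (G → Fin k)) (φ : (G → Fin k) → (G → A)),
    IsSFT Z ∧ IsFactorMapOnto Z φ shift Y

/-- Recursively enumerable predicate. -/
def RE {α : Type*} [Primcodable α] (p : α → Prop) : Prop :=
  Partrec fun a => Part.assert (p a) fun _ => Part.some ()

/-- `x : ℕ → A` begins with the finite word `w`. -/
def ExtendsWord {A : Type*} (x : ℕ → A) (w : List A) : Prop :=
  ∀ i : Fin w.length, x i = w.get i

/-- A closed subset `Z ⊆ A^ℕ` is effectively closed if the set of words whose
cylinder is disjoint from `Z` is recursively enumerable. -/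
def EffectivelyClosedSet {A : Type*} [Primcodable A] [TopologicalSpace A]
    (Z : Set (ℕ → A)) : Prop :=
  IsClosed Z ∧ RE fun w : List A => ∀ x : ℕ → A, ExtendsWord x w → x ∉ Z

/-- `act` defines an action of `G` on the set `X ⊆ β`. -/
def IsActionOn {G β : Type*} [Group G] (act : G → β → β) (X : Set β) : Prop :=
  (∀ g : G, Set.MapsTo (act g) X X) ∧ (∀ x ∈ X, act 1 x = x) ∧
    ∀ (g h : G) (x : β), x ∈ X → act (g * h) x = act g (act h x)

/-- The set representation of the action `act` of `G` on `X ⊆ A^ℕ` with respect to the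
finite generating tuple `s : Fin m → G` (playing the role of the generating set `S`):
the set of `y ∈ (A^S)^ℕ` of the form `y(n)(s) = (s · x)(n)` for some `x ∈ X`. -/
def SetRep {G A : Type*} [Group G] {m : ℕ} (s : Fin m → G)
    (act : G → (ℕ → A) → ℕ → A) (X : Set (ℕ → A)) : Set (ℕ → (Fin m → A)) :=
  {y | ∃ x ∈ X, ∀ i : Fin m, (fun n => y n i) = act (s i) x}

/-- The action `act` of `G` on the closed set `X ⊆ A^ℕ` is effectively closed with respect
to the finite generating tuple `s` (which contains `1` and generates `G` as a monoid):
its set representation is an effectively closed subset of `(A^S)^ℕ`. -/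
def IsEffClosedActionWith {G A : Type*} [Group G] [Primcodable A] [TopologicalSpace A]
    {m : ℕ} (s : Fin m → G) (act : G → (ℕ → A) → ℕ → A) (X : Set (ℕ → A)) : Prop :=
  IsClosed X ∧ IsActionOn act X ∧ (∃ i, s i = 1) ∧
    Submonoid.closure (Set.range s) = ⊤ ∧
    EffectivelyClosedSet (SetRep s act X)

/-- The action `act` of `G` on `X ⊆ A^ℕ` is effectively closed (with respect to some
finite generating set containing `1`). -/
def IsEffClosedAction {G A : Type*} [Group G] [Primcodable A] [TopologicalSpace A]
    (act : G → (ℕ → A) → ℕ → A) (X : Set (ℕ → A)) : Prop :=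
  ∃ (m : ℕ) (s : Fin m → G), IsEffClosedActionWith s act X

/-- The action `act` of `G` on `X ⊆ A^ℕ` is a topological factor of some `G`-subshift
of finite type. -/
def IsFactorOfSFT {G A : Type*} [Group G] [TopologicalSpace A]
    (act : G → (ℕ → A) → ℕ → A) (X : Set (ℕ → A)) : Prop :=
  ∃ (k : ℕ) (Z : Set (G → Fin k)) (φ : (G → Fin k) → (ℕ → A)),
    IsSFT Z ∧ IsFactorMapOnto Z φ act X

/-- A group `G` is (dynamically) self-simulable if every effectively closed action of `G`
on a closed subset of `{0,1}^ℕ` is a topological factor of a `G`-subshift of finite type. -/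
def SelfSimulable (G : Type*) [Group G] : Prop :=
  ∀ (X : Set (ℕ → Bool)) (act : G → (ℕ → Bool) → ℕ → Bool),
    IsEffClosedAction act X → IsFactorOfSFT act X

/-- Amenability via the Følner condition: for every finite `K` and `δ > 0` there is a
nonempty finite `F` with `|KF △ F| ≤ δ |F|`. -/
def Amenable (G : Type*) [Group G] : Prop :=
  ∀ K : Set G, K.Finite → ∀ δ : ℝ, 0 < δ →
    ∃ F : Set G, F.Finite ∧ F.Nonempty ∧
      ((symmDiff (K * F) F).ncard : ℝ) ≤ δ * F.ncard

/-- A finitely generated group is recursively presented: for some finite tuple generating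
`G` as a monoid, the set of words evaluating to the identity is recursively enumerable. -/
def RecursivelyPresented (G : Type*) [Group G] : Prop :=
  ∃ (m : ℕ) (s : Fin m → G), Submonoid.closure (Set.range s) = ⊤ ∧
    RE fun w : List (Fin m) => (w.map s).prod = 1

/-- A finitely generated group has decidable word problem: for some finite tuple generating
`G` as a monoid, the set of words evaluating to the identity is decidable. -/
def DecidableWordProblem (G : Type*) [Group G] : Prop :=
  ∃ (m : ℕ) (s : Fin m → G), Submonoid.closure (Set.range s) = ⊤ ∧
    ComputablePred fun w : List (Fin m) => (w.map s).prod = 1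

/-- A pattern coding `c` (a finite list of pairs (word over the generators, letter))
holds in the configuration `x` at position `g`: `x (g ⬝ w̲) = a` for every pair `(w, a)`
of `c`. This says exactly that `x ∈ g·[c]`. -/
def PCHolds {G A : Type*} [Group G] {m : ℕ} (s : Fin m → G) (x : G → A) (g : G)
    (c : List (List (Fin m) × A)) : Prop :=
  ∀ p ∈ c, x (g * (p.1.map s).prod) = p.2

/-- A `G`-subshift `X ⊆ A^G` is effectively closed by patterns: for some finite generating
tuple `s`, there is a recursively enumerable set `𝒞` of pattern codings such that `X` is the
set of configurations avoiding every translate of every cylinder `[c]`, `c ∈ 𝒞`. -/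
def EffClosedByPatterns {G A : Type*} [Group G] [Primcodable A] (X : Set (G → A)) : Prop :=
  ∃ (m : ℕ) (s : Fin m → G), Submonoid.closure (Set.range s) = ⊤ ∧
    ∃ 𝒞 : Set (List (List (Fin m) × A)), RE (· ∈ 𝒞) ∧
      X = {x : G → A | ∀ (g : G) (c : List (List (Fin m) × A)), c ∈ 𝒞 → ¬ PCHolds s x g c}

/-- Word metric distance associated to a finite tuple `s` generating `G` as a monoid. -/
noncomputable def wordDist {G : Type*} [Group G] {m : ℕ} (s : Fin m → G) (g h : G) : ℕ :=
  sInf {n : ℕ | ∃ w : List (Fin m), w.length = n ∧ (w.map s).prod = g⁻¹ * h}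

/-- Two finitely generated groups are quasi-isometric (with respect to word metrics given
by some finite generating sets). -/
def QuasiIsometric (G₁ G₂ : Type*) [Group G₁] [Group G₂] : Prop :=
  ∃ (m₁ : ℕ) (s₁ : Fin m₁ → G₁) (m₂ : ℕ) (s₂ : Fin m₂ → G₂),
    Submonoid.closure (Set.range s₁) = ⊤ ∧ Submonoid.closure (Set.range s₂) = ⊤ ∧
    ∃ (f : G₂ → G₁) (A B C : ℝ), 1 ≤ A ∧ 0 ≤ B ∧ 0 ≤ C ∧
      (∀ x y : G₂,
        (1 / A) * (wordDist s₂ x y : ℝ) - B ≤ (wordDist s₁ (f x) (f y) : ℝ) ∧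
        (wordDist s₁ (f x) (f y) : ℝ) ≤ A * (wordDist s₂ x y : ℝ) + B) ∧
      ∀ z : G₁, ∃ x : G₂, (wordDist s₁ z (f x) : ℝ) ≤ C

/-- A finitely presented group: a quotient of a finitely generated free group by the
normal closure of finitely many relators. -/
def FinitelyPresentedGroup (G : Type*) [Group G] : Prop :=
  ∃ (m : ℕ) (f : FreeGroup (Fin m) →* G) (R : Finset (FreeGroup (Fin m))),
    Function.Surjective f ∧ f.ker = Subgroup.normalClosure (R : Set (FreeGroup (Fin m)))

/-- A subgroup `Δ ≤ G` is mediated: there is a finite generating set `T` of `G` such that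
`Δ ∩ tΔt⁻¹` is non-amenable for every `t ∈ T`. -/
def Mediated {G : Type*} [Group G] (Δ : Subgroup G) : Prop :=
  ∃ T : Finset G, Subgroup.closure (T : Set G) = ⊤ ∧
    ∀ t ∈ T, ¬ Amenable ↥(Δ ⊓ Subgroup.map (MulAut.conj t).toMonoidHom Δ)

end SelfSim
namespace SelfSim

/-- All words of length `n` over a finite alphabet. -/
noncomputable def wordsOf (A : Type) [Fintype A] (n : ℕ) : List (List A) :=
  Nat.rec [[]] (fun _ Ws => Ws.flatMap fun w => (Finset.univ : Finset A).toList.map (· :: w)) n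

lemma mem_wordsOf {A : Type} [Fintype A] (n : ℕ) : ∀ w : List A, w ∈ wordsOf A n ↔ w.length = n := by
  induction n with
  | zero => intro w; simp [wordsOf]
  | succ n ih =>
    intro w
    have : wordsOf A (n+1) = (wordsOf A n).flatMap
      fun w => (Finset.univ : Finset A).toList.map (· :: w) := rfl
    rw [this]
    cases w with
    | nil => simp
    | cons a w => simp [ih]

lemma primrec_wordsOf (A : Type) [Fintype A] [Primcodable A] : Primrec (wordsOf A) := by
  apply Primrec.nat_rec₁
  refine Primrec.list_flatMap Primrec.snd ?_
  refine Primrec.list_map (Primrec.const _) ?_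
  exact Primrec.list_cons.comp Primrec.snd (Primrec.snd.comp Primrec.fst)

lemma computable_all {C : Type} [Primcodable C] (good : C → Bool) (hg : Computable good) :
    ∃ f : List C → Bool, Computable f ∧ ∀ L, f L = true ↔ ∀ c ∈ L, good c = true := by
  let step : List C → ℕ × Bool → Bool := fun L p =>
    Option.casesOn (L[p.1]?) p.2 (fun c => p.2 && good c)
  refine ⟨fun L => Nat.rec true (fun i b => step L (i, b)) L.length, ?_, ?_⟩
  · refine Computable.nat_rec Computable.list_length (Computable.const true) ?_
    refine Computable.option_casesOn (o := fun q : List C × (ℕ × Bool) => q.1[q.2.1]?)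
      (f := fun q => q.2.2) (g := fun q c => q.2.2 && good c) ?_ ?_ ?_
    · exact Computable.list_getElem?.comp Computable.fst (Computable.fst.comp Computable.snd)
    · exact Computable.snd.comp Computable.snd
    · exact (Primrec.and.to_comp).comp
        (Computable.snd.comp (Computable.snd.comp Computable.fst)) (hg.comp Computable.snd)
  · intro L
    have key : ∀ k ≤ L.length, (Nat.rec true (fun i b => step L (i, b)) k : Bool) = true ↔
        ∀ i, i < k → ∀ c, L[i]? = some c → good c = true := by
      intro k
      induction k with
      | zero => simp
      | succ k ih =>
        intro hk
        have hk' : L[k]? = some L[k] := List.getElem?_eq_getElem hk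
        have h1 : (Nat.rec true (fun i b => step L (i, b)) (k+1) : Bool)
          = ((Nat.rec true (fun i b => step L (i, b)) k : Bool) && good L[k]) := by
          change step L (k, _) = _
          simp only [step, hk']
        rw [h1, Bool.and_eq_true, ih (by omega)]
        constructor
        · rintro ⟨h, h'⟩ i hi c hc
          rcases Nat.lt_succ_iff_lt_or_eq.1 hi with h2 | rfl
          · exact h i h2 c hc
          · rw [hk'] at hc; cases hc; exact h'
        · intro h
          exact ⟨fun i hi => h i (by omega), h k (by omega) _ hk'⟩
    rw [key _ le_rfl]
    constructor
    · intro h c hc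
      obtain ⟨i, hi, rfl⟩ := List.getElem_of_mem hc
      exact h i hi _ (List.getElem?_eq_getElem hi)
    · intro h i hi c hc
      exact h c (List.mem_of_getElem? hc)

lemma RE_exists {α β : Type} [Primcodable α] [Primcodable β] (f : α → β → Bool)
    (hf : Computable₂ f) : RE fun a => ∃ b, f a b = true := by
  have h : Partrec fun a => Nat.rfindOpt (fun n =>
      (Encodable.decode (α := β) n).bind fun b => bif f a b then some () else none) := by
    refine Partrec.rfindOpt ?_
    refine Computable.option_bind (Computable.decode.comp Computable.snd) ?_
    refine Computable.cond ?_ (Computable.const _) (Computable.const _)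
    exact hf.comp (Computable.fst.comp Computable.fst) Computable.snd
  have h2 := h.dom_re
  refine REPred.of_eq h2 ?_
  intro a
  rw [Nat.rfindOpt_dom]
  constructor
  · rintro ⟨n, u, h⟩
    simp only [Option.mem_def, Option.bind_eq_some_iff] at h
    obtain ⟨b, _, h⟩ := h
    refine ⟨b, ?_⟩
    cases hb : f a b <;> simp_all
  · rintro ⟨b, h⟩
    exact ⟨Encodable.encode b, (), by simp [h]⟩

lemma extendsWord_iff {A : Type} (x : ℕ → A) (w : List A) :
    ExtendsWord x w ↔ ∀ n (h : n < w.length), x n = w[n] :=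
  ⟨fun H n h => H ⟨n, h⟩, fun H i => H i i.2⟩

/-- Abstract criterion for effective closedness, through computably enumerable
clopen constraints and compactness. -/
lemma effClosed_of {A C : Type} [Fintype A] [Primcodable A] [TopologicalSpace A]
    [DiscreteTopology A] [Inhabited A] [Primcodable C]
    (good : C → Bool) (hgood : Computable good) (viol : C → List A → Bool)
    (hviol : Primrec₂ viol) (Viol : C → (ℕ → A) → Prop)
    (hV1 : ∀ c w y, ExtendsWord y w → viol c w = true → Viol c y)
    (bd : C → ℕ)
    (hV2 : ∀ c w y, ExtendsWord y w → bd c ≤ w.length → Viol c y → viol c w = true)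
    (Y : Set (ℕ → A)) (hY : ∀ y, y ∈ Y ↔ ∀ c, good c = true → ¬ Viol c y) :
    EffectivelyClosedSet Y := by
  have hcyl : ∀ (n : ℕ) (y : ℕ → A), IsOpen {z : ℕ → A | ∀ i < n, z i = y i} := by
    intro n y
    have : {z : ℕ → A | ∀ i < n, z i = y i} = ⋂ i ∈ Finset.range n, {z | z i = y i} := by
      ext; simp
    rw [this]
    refine isOpen_biInter_finset fun i _ => ?_
    exact IsOpen.preimage (f := fun z : ℕ → A => z i) (continuous_apply i)
      (isOpen_discrete ({y i} : Set A))
  have hext : ∀ (n : ℕ) (y z : ℕ → A), (∀ i < n, z i = y i) →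
      ExtendsWord z (List.ofFn fun i : Fin n => y i) := by
    intro n y z h
    rw [extendsWord_iff]
    intro i hi
    simp at hi ⊢
    exact h i hi
  have hVopen : ∀ c, IsOpen {y | Viol c y} := by
    intro c
    rw [isOpen_iff_forall_mem_open]
    intro y hy
    refine ⟨_, ?_, hcyl (bd c) y, fun _ _ => rfl⟩
    intro z hz
    have h1 := hV2 c _ y (hext (bd c) y y fun _ _ => rfl) (by simp) hy
    exact hV1 c _ z (hext (bd c) y z hz) h1
  refine ⟨?_, ?_⟩
  · have : Y = ⋂ c, ⋂ (_ : good c = true), {y | Viol c y}ᶜ := by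
      ext y; simp [hY]
    rw [this]
    exact isClosed_iInter fun c => isClosed_iInter fun _ => (hVopen c).isClosed_compl
  · obtain ⟨f, hf, hfs⟩ := computable_all good hgood
    -- the primitive recursive part
    have q1 : PrimrecRel fun (c : C) (p : List A × List A) => viol c (p.1 ++ p.2) = true := by
      refine Primrec.eq.comp ?_ (Primrec.const true)
      exact hviol.comp Primrec.fst (Primrec.list_append.comp (Primrec.fst.comp Primrec.snd)
        (Primrec.snd.comp Primrec.snd))
    have q2 : PrimrecRel fun (w' : List A) (p : List A × List C) =>
        ∃ c ∈ p.2, viol c (p.1 ++ w') = true :=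
      q1.exists_mem_list.comp (Primrec.snd.comp Primrec.snd)
        (Primrec.pair (Primrec.fst.comp Primrec.snd) Primrec.fst)
    have q3 : PrimrecPred fun (p : List A × (ℕ × List C)) =>
        ∀ w' ∈ wordsOf A p.2.1, ∃ c ∈ p.2.2, viol c (p.1 ++ w') = true :=
      q2.forall_mem_list.comp
        ((primrec_wordsOf A).comp (Primrec.fst.comp Primrec.snd))
        (Primrec.pair Primrec.fst (Primrec.snd.comp Primrec.snd))
    have q4 := q3.decide
    have q5 : Computable₂ (fun (w : List A) (p : ℕ × List C) => f p.2 &&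
        decide (∀ w' ∈ wordsOf A p.1, ∃ c ∈ p.2, viol c (w ++ w') = true)) :=
      Primrec.and.to_comp.comp (hf.comp (Computable.snd.comp Computable.snd)) q4.to_comp
    refine REPred.of_eq (RE_exists _ q5) ?_
    intro w
    constructor
    · rintro ⟨⟨N, L⟩, h⟩ x hx hxY
      rw [Bool.and_eq_true, hfs, decide_eq_true_iff] at h
      obtain ⟨hL, h⟩ := h
      let w' : List A := List.ofFn fun i : Fin N => x (w.length + i)
      obtain ⟨c, hc, hv⟩ := h w' ((mem_wordsOf _ _).2 (by simp [w']))
      refine (hY x).1 hxY c (hL c hc) (hV1 c _ x ?_ hv)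
      rw [extendsWord_iff] at hx ⊢
      intro n hn
      by_cases h : n < w.length
      · rw [List.getElem_append_left h]; exact hx n h
      · rw [List.getElem_append_right (by omega)]
        simp only [w', List.getElem_ofFn]
        congr 1; omega
    · intro h
      -- compactness
      have hK : IsCompact {x : ℕ → A | ExtendsWord x w} := by
        apply IsClosed.isCompact
        have : {x : ℕ → A | ExtendsWord x w} = ⋂ i : Fin w.length, {x | x i = w.get i} := by
          ext; simp [ExtendsWord]
        rw [this]
        refine isClosed_iInter fun i => ?_
        exact isClosed_eq (continuous_apply (i : ℕ)) continuous_const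
      obtain ⟨t, ht⟩ := hK.elim_finite_subcover
        (fun c : {c : C // good c = true} => {y | Viol c.1 y}) (fun c => hVopen _) (by
          intro x hx
          have := h x hx
          rw [hY] at this
          push Not at this
          obtain ⟨c, hc, hv⟩ := this
          exact Set.mem_iUnion.2 ⟨⟨c, hc⟩, hv⟩)
      refine ⟨(t.sup fun c => bd c.1, t.toList.map Subtype.val), ?_⟩
      rw [Bool.and_eq_true, hfs, decide_eq_true_iff]
      refine ⟨?_, ?_⟩
      · intro c hc
        simp only [List.mem_map] at hc
        obtain ⟨c, _, rfl⟩ := hc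
        exact c.2
      · intro w' hw'
        rw [mem_wordsOf] at hw'
        let x : ℕ → A := fun n => (w ++ w').getD n default
        have hx : ExtendsWord x (w ++ w') := by
          rw [extendsWord_iff]; intro n hn
          simp only [x]
          exact List.getD_eq_getElem _ _ hn
        have hxw : ExtendsWord x w := by
          rw [extendsWord_iff] at hx ⊢
          intro n hn
          rw [hx n (by simp; omega), List.getElem_append_left hn]
        have := ht hxw
        simp only [Set.mem_iUnion] at this
        obtain ⟨c, hct, hc⟩ := this
        refine ⟨c.1, ?_, hV2 c.1 _ x hx ?_ hc⟩
        · simp only [List.mem_map, Finset.mem_toList]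
          exact ⟨c, hct, rfl⟩
        · have := Finset.le_sup (f := fun c : {c : C // good c = true} => bd c.1) hct
          simp only [List.length_append, hw']
          omega

end SelfSim
namespace SelfSim

section construction

variable {G : Type*} [Group G] {m : ℕ}

/-- Evaluation of a word in the group. -/
def ev (s : Fin m → G) (w : List (Fin m)) : G := (w.map s).prod

lemma ev_append (s : Fin m → G) (v w : List (Fin m)) : ev s (v ++ w) = ev s v * ev s w := by
  simp [ev]

/-- Words of length at most one: the generators together with the identity. -/
def gw (i : Fin (m + 1)) : List (Fin m) := Fin.cases [] (fun j => [j]) i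

/-- The coordinates: a pair of words. -/
def dec (n : ℕ) : List (Fin m) × List (Fin m) := (Encodable.decode n).getD ([], [])

/-- The code of a pair of words. -/
def enc (u v : List (Fin m)) : ℕ := Encodable.encode (u, v)

@[simp] lemma dec_enc (u v : List (Fin m)) : dec (enc u v) = (u, v) := by simp [dec, enc]

lemma primrec_dec : Primrec (dec (m := m)) :=
  Primrec.option_getD.comp Primrec.decode (Primrec.const _)

lemma primrec_enc : Primrec₂ (enc (m := m)) :=
  Primrec.encode.comp (Primrec.pair Primrec.fst Primrec.snd)

/-- The free system: families of `2`-colourings, one for each word `u`, such that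
`h, uh, uuh` are not monochromatic when `u ≠ 1`. -/
def freeSys (s : Fin m → G) : Set (ℕ → Bool) :=
  {x | (∀ n n', (dec (m := m) n).1 = (dec n').1 → ev s (dec n).2 = ev s (dec n').2 → x n = x n') ∧
    ∀ u v, ev s u ≠ 1 →
      ¬ (x (enc u v) = x (enc u (u ++ v)) ∧ x (enc u (u ++ v)) = x (enc u (u ++ (u ++ v))))}

/-- The action on the free system, by right translation. -/
def freeAct (s : Fin m → G) (wd : G → List (Fin m)) (g : G) (x : ℕ → Bool) : ℕ → Bool :=
  fun n => x (enc (dec (m := m) n).1 (wd (ev s (dec n).2 * g)))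

lemma freeAct_eq (s : Fin m → G) (wd : G → List (Fin m)) (hwd : ∀ g, ev s (wd g) = g)
    {x : ℕ → Bool} (hx : x ∈ freeSys s) (g : G) (n k : ℕ) (h1 : (dec (m := m) n).1 = (dec k).1)
    (h2 : ev s (dec n).2 * g = ev s (dec k).2) : freeAct s wd g x n = x k := by
  refine hx.1 _ _ ?_ ?_
  · simp [h1]
  · simp [hwd, h2]

lemma isClosed_freeSys (s : Fin m → G) : IsClosed (freeSys s) := by
  have hc : ∀ n, Continuous fun x : ℕ → Bool => x n := fun n => continuous_apply n
  have h1 : ∀ n n' : ℕ, IsClopen {x : ℕ → Bool | x n = x n'} := fun n n' =>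
    ⟨isClosed_eq (hc n) (hc n'),
      IsOpen.preimage (f := fun x : ℕ → Bool => (x n, x n')) ((hc n).prodMk (hc n'))
        (isOpen_discrete {p : Bool × Bool | p.1 = p.2})⟩
  unfold freeSys
  simp only [Set.ofPred_and, Set.ofPred_forall]
  refine IsClosed.inter ?_ ?_
  · refine isClosed_iInter fun n => isClosed_iInter fun n' => isClosed_iInter fun _ =>
      isClosed_iInter fun _ => (h1 _ _).1
  · refine isClosed_iInter fun u => isClosed_iInter fun v => isClosed_iInter fun _ => ?_
    exact ((h1 _ _).inter (h1 _ _)).compl.1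

lemma freeAct_isAction (s : Fin m → G) (wd : G → List (Fin m)) (hwd : ∀ g, ev s (wd g) = g) :
    IsActionOn (freeAct s wd) (freeSys s) := by
  refine ⟨?_, ?_, ?_⟩
  · intro g x hx
    refine ⟨?_, ?_⟩
    · intro n n' h1 h2
      refine freeAct_eq s wd hwd hx g n _ ?_ ?_
      · simp [h1]
      · simp [hwd, h2]
    · intro u v hu
      have := hx.2 u (wd (ev s v * g)) hu
      rw [freeAct_eq s wd hwd hx g (enc u v) (enc u (wd (ev s v * g))) (by simp) (by simp [hwd]),
        freeAct_eq s wd hwd hx g (enc u (u ++ v)) (enc u (u ++ (wd (ev s v * g)))) (by simp)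
          (by simp [hwd, ev_append, mul_assoc]),
        freeAct_eq s wd hwd hx g (enc u (u ++ (u ++ v))) (enc u (u ++ (u ++ (wd (ev s v * g)))))
          (by simp) (by simp [hwd, ev_append, mul_assoc])]
      exact this
  · intro x hx
    funext n
    exact freeAct_eq s wd hwd hx 1 n n rfl (by simp)
  · intro g h x hx
    funext n
    refine freeAct_eq s wd hwd hx _ n _ ?_ ?_
    · simp
    · simp [hwd, mul_assoc]

lemma free_of_fixed (s : Fin m → G) (wd : G → List (Fin m)) (hwd : ∀ g, ev s (wd g) = g)
    {x : ℕ → Bool} (hx : x ∈ freeSys s) (g : G) (hg : freeAct s wd g x = x) : g = 1 := by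
  by_contra hne
  have key := hx.2 (wd g) [] (by rwa [hwd])
  apply key
  have h0 : ev s ([] : List (Fin m)) = 1 := by simp [ev]
  have e1 := freeAct_eq s wd hwd hx g (enc (wd g) []) (enc (wd g) (wd g ++ [])) (by simp)
    (by simp [hwd, h0])
  have e2 := freeAct_eq s wd hwd hx g (enc (wd g) (wd g ++ []))
    (enc (wd g) (wd g ++ (wd g ++ []))) (by simp) (by simp [hwd, ev_append])
  rw [hg] at e1 e2
  exact ⟨e1, e2⟩

lemma exists_colouring (g : G) (hg : g ≠ 1) :
    ∃ A : Set G, (∀ h, h ∈ A → g * h ∉ A) ∧ ∀ h, h ∈ A ∨ g * h ∈ A ∨ g * (g * h) ∈ A := by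
  obtain ⟨A, hA⟩ := zorn_subset {A : Set G | ∀ h, h ∈ A → g * h ∉ A} (by
    intro c hc hch
    refine ⟨⋃₀ c, ?_, fun t ht => Set.subset_sUnion_of_mem ht⟩
    rintro h ⟨a, ha, hha⟩ ⟨b, hb, hhb⟩
    rcases hch.total ha hb with hab | hab
    · exact hc hb h (hab hha) hhb
    · exact hc ha h hha (hab hhb))
  refine ⟨A, hA.prop, ?_⟩
  intro h
  by_contra hcon
  push Not at hcon
  obtain ⟨h1, h2, h3⟩ := hcon
  have hins : insert (g * h) A ∈ {A : Set G | ∀ h, h ∈ A → g * h ∉ A} := by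
    rintro k (rfl | hk) (hk' | hk')
    · exact hg (by simpa using hk')
    · exact h3 hk'
    · have : k = h := by simpa using hk'
      exact h1 (this ▸ hk)
    · exact hA.prop k hk hk'
  exact h2 (hA.le_of_ge hins (Set.subset_insert _ _) (Set.mem_insert _ _))

lemma freeSys_nonempty (s : Fin m → G) : (freeSys s).Nonempty := by
  classical
  choose A hA1 hA2 using fun (u : {u : List (Fin m) // ev s u ≠ 1}) =>
    exists_colouring (ev s u.1) u.2
  let B : List (Fin m) → Set G := fun u => if h : ev s u ≠ 1 then A ⟨u, h⟩ else ∅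
  refine ⟨fun n => decide (ev s (dec n).2 ∈ B (dec n).1), ?_, ?_⟩
  · intro n n' h1 h2
    simp only [h1, h2]
  · intro u v hu
    have hB : B u = A ⟨u, hu⟩ := by simp only [B, dif_pos hu]
    simp only [dec_enc, hB, ev_append, decide_eq_decide]
    have p1 := hA1 ⟨u, hu⟩ (ev s v)
    have p2 := hA2 ⟨u, hu⟩ (ev s v)
    dsimp only at p1 p2
    tauto

/-- The type of certificates of violated constraints. -/
abbrev Cert (m : ℕ) : Type := (Bool × List (Fin m)) × (ℕ × Fin (m + 1)) × (ℕ × Fin (m + 1))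

/-- Validity of a certificate, given a decision function for the word problem. -/
def certGood (wp : List (Fin m) → Bool) (c : Cert m) : Bool :=
  bif c.1.1 then
    decide ((dec (m := m) c.2.1.1).1 = (dec c.2.2.1).1) &&
      (wp ((dec c.2.1.1).2 ++ (gw c.2.1.2 ++ c.1.2)) &&
        wp ((dec c.2.2.1).2 ++ (gw c.2.2.2 ++ c.1.2)))
  else !(wp (dec c.2.1.1).1)

/-- The pattern forbidden by a certificate, in terms of a lookup predicate. -/
def certForm (h : ℕ → Fin (m + 1) → Bool → Bool) (c : Cert m) : Bool :=
  bif c.1.1 then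
    (h c.2.1.1 c.2.1.2 true && h c.2.2.1 c.2.2.2 false) ||
      (h c.2.1.1 c.2.1.2 false && h c.2.2.1 c.2.2.2 true)
  else
    (h (enc (dec (m := m) c.2.1.1).1 (dec (m := m) c.2.1.1).2) 0 true &&
      (h (enc (dec (m := m) c.2.1.1).1 ((dec c.2.1.1).1 ++ (dec c.2.1.1).2)) 0 true &&
      h (enc (dec (m := m) c.2.1.1).1
        ((dec c.2.1.1).1 ++ ((dec c.2.1.1).1 ++ (dec c.2.1.1).2))) 0 true)) ||
    (h (enc (dec (m := m) c.2.1.1).1 (dec (m := m) c.2.1.1).2) 0 false &&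
      (h (enc (dec (m := m) c.2.1.1).1 ((dec c.2.1.1).1 ++ (dec c.2.1.1).2)) 0 false &&
      h (enc (dec (m := m) c.2.1.1).1
        ((dec c.2.1.1).1 ++ ((dec c.2.1.1).1 ++ (dec c.2.1.1).2))) 0 false))

/-- A bound on the coordinates used by a certificate. -/
def certBound (c : Cert m) : ℕ :=
  c.2.1.1 + c.2.2.1 + enc (dec (m := m) c.2.1.1).1 (dec (m := m) c.2.1.1).2 +
    enc (dec (m := m) c.2.1.1).1 ((dec c.2.1.1).1 ++ (dec c.2.1.1).2) +
    enc (dec (m := m) c.2.1.1).1 ((dec c.2.1.1).1 ++ ((dec c.2.1.1).1 ++ (dec c.2.1.1).2)) + 1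

lemma certForm_mono (h h' : ℕ → Fin (m + 1) → Bool → Bool) (c : Cert m)
    (H : ∀ n < certBound c, ∀ i b, h n i b = true → h' n i b = true) (hc : certForm h c = true) :
    certForm h' c = true := by
  unfold certForm at hc ⊢
  unfold certBound at H
  cases ht : c.1.1
  · simp only [ht, cond_false, Bool.or_eq_true, Bool.and_eq_true] at hc ⊢
    rcases hc with ⟨a, b, d⟩ | ⟨a, b, d⟩
    · exact Or.inl ⟨H _ (by omega) _ _ a, H _ (by omega) _ _ b, H _ (by omega) _ _ d⟩
    · exact Or.inr ⟨H _ (by omega) _ _ a, H _ (by omega) _ _ b, H _ (by omega) _ _ d⟩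
  · simp only [ht, cond_true, Bool.or_eq_true, Bool.and_eq_true] at hc ⊢
    rcases hc with ⟨a, b⟩ | ⟨a, b⟩
    · exact Or.inl ⟨H _ (by omega) _ _ a, H _ (by omega) _ _ b⟩
    · exact Or.inr ⟨H _ (by omega) _ _ a, H _ (by omega) _ _ b⟩

/-- Lookup in a finite word. -/
def has (w : List (Fin (m + 1) → Bool)) (n : ℕ) (i : Fin (m + 1)) (b : Bool) : Bool :=
  decide (w[n]?.map (fun f => f i) = some b)

/-- Lookup in an infinite word. -/
def hasI (y : ℕ → Fin (m + 1) → Bool) (n : ℕ) (i : Fin (m + 1)) (b : Bool) : Bool :=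
  decide (y n i = b)

lemma primrec_has {α : Type} [Primcodable α] {w : α → List (Fin (m + 1) → Bool)} {n : α → ℕ}
    {i : α → Fin (m + 1)} (b : Bool) (hw : Primrec w) (hn : Primrec n) (hi : Primrec i) :
    Primrec fun a => has (w a) (n a) (i a) b := by
  have h : PrimrecPred fun a => (w a)[n a]?.map (fun f => f (i a)) = some b := by
    refine Primrec.eq.comp ?_ (Primrec.const _)
    refine Primrec.option_map (Primrec.list_getElem?.comp hw hn) ?_
    have hev : Primrec fun p : (Fin (m + 1) → Bool) × Fin (m + 1) => p.1 p.2 :=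
      Primrec.dom_finite _
    exact hev.comp (Primrec.pair Primrec.snd (hi.comp Primrec.fst))
  exact h.decide

lemma primrec_viol : Primrec₂ fun (c : Cert m) (w : List (Fin (m + 1) → Bool)) =>
    certForm (has w) c := by
  have hw : Primrec fun p : Cert m × List (Fin (m + 1) → Bool) => p.2 := Primrec.snd
  have hc : Primrec fun p : Cert m × List (Fin (m + 1) → Bool) => p.1 := Primrec.fst
  have ht : Primrec fun p : Cert m × List (Fin (m + 1) → Bool) => p.1.1.1 :=
    Primrec.fst.comp (Primrec.fst.comp hc)
  have hn : Primrec fun p : Cert m × List (Fin (m + 1) → Bool) => p.1.2.1.1 :=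
    Primrec.fst.comp (Primrec.fst.comp (Primrec.snd.comp hc))
  have hi : Primrec fun p : Cert m × List (Fin (m + 1) → Bool) => p.1.2.1.2 :=
    Primrec.snd.comp (Primrec.fst.comp (Primrec.snd.comp hc))
  have hn' : Primrec fun p : Cert m × List (Fin (m + 1) → Bool) => p.1.2.2.1 :=
    Primrec.fst.comp (Primrec.snd.comp (Primrec.snd.comp hc))
  have hi' : Primrec fun p : Cert m × List (Fin (m + 1) → Bool) => p.1.2.2.2 :=
    Primrec.snd.comp (Primrec.snd.comp (Primrec.snd.comp hc))
  have hu : Primrec fun p : Cert m × List (Fin (m + 1) → Bool) => (dec (m := m) p.1.2.1.1).1 :=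
    Primrec.fst.comp (primrec_dec.comp hn)
  have hv : Primrec fun p : Cert m × List (Fin (m + 1) → Bool) => (dec (m := m) p.1.2.1.1).2 :=
    Primrec.snd.comp (primrec_dec.comp hn)
  have huv := Primrec.list_append.comp hu hv
  have huuv := Primrec.list_append.comp hu huv
  have e1 := primrec_enc.comp hu hv
  have e2 := primrec_enc.comp hu huv
  have e3 := primrec_enc.comp hu huuv
  have h0 : Primrec fun _ : Cert m × List (Fin (m + 1) → Bool) => (0 : Fin (m + 1)) :=
    Primrec.const 0
  refine Primrec.cond ht ?_ ?_
  · exact Primrec.or.comp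
      (Primrec.and.comp (primrec_has true hw hn hi) (primrec_has false hw hn' hi'))
      (Primrec.and.comp (primrec_has false hw hn hi) (primrec_has true hw hn' hi'))
  · exact Primrec.or.comp
      (Primrec.and.comp (primrec_has true hw e1 h0)
        (Primrec.and.comp (primrec_has true hw e2 h0) (primrec_has true hw e3 h0)))
      (Primrec.and.comp (primrec_has false hw e1 h0)
        (Primrec.and.comp (primrec_has false hw e2 h0) (primrec_has false hw e3 h0)))

lemma computable_certGood (wp : List (Fin m) → Bool) (hwp : Computable wp) :
    Computable (certGood wp) := by
  have hc : Primrec fun c : Cert m => c := Primrec.id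
  have ht : Primrec fun c : Cert m => c.1.1 := Primrec.fst.comp (Primrec.fst.comp hc)
  have hz : Primrec fun c : Cert m => c.1.2 := Primrec.snd.comp (Primrec.fst.comp hc)
  have hn : Primrec fun c : Cert m => c.2.1.1 :=
    Primrec.fst.comp (Primrec.fst.comp (Primrec.snd.comp hc))
  have hi : Primrec fun c : Cert m => c.2.1.2 :=
    Primrec.snd.comp (Primrec.fst.comp (Primrec.snd.comp hc))
  have hn' : Primrec fun c : Cert m => c.2.2.1 :=
    Primrec.fst.comp (Primrec.snd.comp (Primrec.snd.comp hc))
  have hi' : Primrec fun c : Cert m => c.2.2.2 :=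
    Primrec.snd.comp (Primrec.snd.comp (Primrec.snd.comp hc))
  have hu := Primrec.fst.comp ((primrec_dec (m := m)).comp hn)
  have hu' := Primrec.fst.comp ((primrec_dec (m := m)).comp hn')
  have hv := Primrec.snd.comp ((primrec_dec (m := m)).comp hn)
  have hv' := Primrec.snd.comp ((primrec_dec (m := m)).comp hn')
  have hg : Primrec (gw (m := m)) := Primrec.dom_finite _
  have hw1 := Primrec.list_append.comp hv (Primrec.list_append.comp (hg.comp hi) hz)
  have hw2 := Primrec.list_append.comp hv' (Primrec.list_append.comp (hg.comp hi') hz)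
  have heq : PrimrecPred fun c : Cert m => (dec (m := m) c.2.1.1).1 = (dec c.2.2.1).1 :=
    Primrec.eq.comp hu hu'
  refine Computable.cond ht.to_comp ?_ ?_
  · exact Primrec.and.to_comp.comp heq.decide.to_comp
      (Primrec.and.to_comp.comp (hwp.comp hw1.to_comp) (hwp.comp hw2.to_comp))
  · exact Primrec.not.to_comp.comp (hwp.comp hu.to_comp)

lemma mem_setRep_iff (s : Fin m → G) (wd : G → List (Fin m)) (hwd : ∀ g, ev s (wd g) = g)
    (wp : List (Fin m) → Bool) (hwp : ∀ w, wp w = true ↔ ev s w = 1)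
    (y : ℕ → Fin (m + 1) → Bool) :
    y ∈ SetRep (fun i => ev s (gw i)) (freeAct s wd) (freeSys s) ↔
      ∀ c, certGood wp c = true → ¬ certForm (hasI y) c = true := by
  have hg0 : ev s (gw 0) = 1 := by simp [ev, gw]
  constructor
  · rintro ⟨x, hx, hy⟩ ⟨⟨t, z⟩, ⟨n, i⟩, ⟨n', i'⟩⟩ hgood hform
    have hy' : ∀ n i, y n i = freeAct s wd (ev s (gw i)) x n := fun n i => congrFun (hy i) n
    cases t
    · simp only [certGood, certForm, cond_false, Bool.not_eq_true', hasI, Bool.or_eq_true,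
        Bool.and_eq_true, decide_eq_true_eq] at hgood hform
      have hne : ev s (dec n).1 ≠ 1 := by
        rw [Ne, ← hwp, hgood]; simp
      have hk := hx.2 (dec n).1 (dec n).2 hne
      simp only [hy', hg0, (freeAct_isAction s wd hwd).2.1 x hx] at hform
      apply hk
      rcases hform with ⟨a, b, c⟩ | ⟨a, b, c⟩ <;> rw [a, b, c] <;> simp
    · simp only [certGood, certForm, cond_true, hasI, Bool.or_eq_true,
        Bool.and_eq_true, decide_eq_true_eq, hwp, ev_append] at hgood hform
      obtain ⟨hu, h1, h2⟩ := hgood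
      have h3 : ev s (dec n).2 * ev s (gw i) = ev s (dec n').2 * ev s (gw i') := by
        rw [← mul_assoc] at h1 h2
        rw [eq_inv_of_mul_eq_one_left h1, eq_inv_of_mul_eq_one_left h2]
      have : y n i = y n' i' := by
        rw [hy', hy']
        simp only [freeAct, hu, h3]
      rcases hform with ⟨a, b⟩ | ⟨a, b⟩ <;> rw [a, b] at this <;> simp at this
  · intro H
    have hA : ∀ n n' i i', (dec (m := m) n).1 = (dec n').1 →
        ev s (dec n).2 * ev s (gw i) = ev s (dec n').2 * ev s (gw i') → y n i = y n' i' := by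
      intro n n' i i' hu hv
      have := H ((true, wd (ev s (dec n).2 * ev s (gw i))⁻¹), (n, i), (n', i'))
        (by
          simp only [certGood, cond_true, Bool.and_eq_true, decide_eq_true_eq, hwp, ev_append, hwd,
            ← mul_assoc]
          exact ⟨hu, mul_inv_cancel _, by rw [← hv]; exact mul_inv_cancel _⟩)
      simp only [certForm, cond_true, hasI] at this
      revert this
      cases y n i <;> cases y n' i' <;> simp
    have hB : ∀ u v, ev s u ≠ 1 → ¬ (y (enc u v) 0 = y (enc u (u ++ v)) 0 ∧
        y (enc u (u ++ v)) 0 = y (enc u (u ++ (u ++ v))) 0) := by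
      intro u v hu
      have := H ((false, []), (enc u v, 0), (0, 0)) (by
        simp only [certGood, cond_false, dec_enc, Bool.not_eq_true']
        rw [← Bool.not_eq_true, hwp]; exact hu)
      simp only [certForm, cond_false, hasI, dec_enc] at this
      revert this
      cases y (enc u v) 0 <;> cases y (enc u (u ++ v)) 0 <;>
        cases y (enc u (u ++ (u ++ v))) 0 <;> simp
    refine ⟨fun n => y n 0, ⟨?_, hB⟩, ?_⟩
    · intro n n' h1 h2
      exact hA n n' 0 0 h1 (by rw [h2])
    · intro i
      funext n
      refine hA _ _ _ _ ?_ ?_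
      · simp
      · simp [hwd, hg0]

lemma effClosed_setRep (s : Fin m → G) (wd : G → List (Fin m)) (hwd : ∀ g, ev s (wd g) = g)
    (wp : List (Fin m) → Bool) (hwpc : Computable wp) (hwp : ∀ w, wp w = true ↔ ev s w = 1) :
    EffectivelyClosedSet (SetRep (fun i => ev s (gw i)) (freeAct s wd) (freeSys s)) := by
  have h1 : ∀ (w : List (Fin (m + 1) → Bool)) (y : ℕ → Fin (m + 1) → Bool), ExtendsWord y w →
      ∀ n i b, has w n i b = true → hasI y n i b = true := by
    intro w y hy n i b h
    rw [extendsWord_iff] at hy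
    simp only [has, hasI, decide_eq_true_eq, Option.map_eq_some_iff] at h ⊢
    obtain ⟨f, hf, hb⟩ := h
    obtain ⟨hn, rfl⟩ := List.getElem?_eq_some_iff.1 hf
    rw [hy n hn, hb]
  have h2 : ∀ (w : List (Fin (m + 1) → Bool)) (y : ℕ → Fin (m + 1) → Bool), ExtendsWord y w →
      ∀ n < w.length, ∀ i b, hasI y n i b = true → has w n i b = true := by
    intro w y hy n hn i b h
    rw [extendsWord_iff] at hy
    simp only [has, hasI, decide_eq_true_eq] at h ⊢
    rw [List.getElem?_eq_getElem hn, ← hy n hn]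
    simp [h]
  refine effClosed_of (certGood wp) (computable_certGood wp hwpc)
    (fun c w => certForm (has w) c) primrec_viol
    (fun c y => certForm (hasI y) c = true) ?_ certBound ?_ _
    (mem_setRep_iff s wd hwd wp hwp)
  · intro c w y hy hc
    exact certForm_mono _ _ c (fun n _ i b => h1 w y hy n i b) hc
  · intro c w y hy hb hc
    exact certForm_mono _ _ c (fun n hn i b => h2 w y hy n (lt_of_lt_of_le hn hb) i b) hc

end construction

end SelfSim

namespace SelfSim

/-- Every finitely generated self-simulable group with decidable word problem
admits a nonempty strongly aperiodic subshift of finite type. -/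
theorem exists_strongly_aperiodic_SFT
    (G : Type*) [Group G] (hfg : Group.FG G)
    (hwp : DecidableWordProblem G) (hss : SelfSimulable G) :
    ∃ (k : ℕ) (X : Set (G → Fin k)),
      IsSFT X ∧ X.Nonempty ∧
        ∀ (g : G) (x : G → Fin k), x ∈ X → shift g x = x → g = 1 := by
  obtain ⟨m, s, hs, hc⟩ := hwp
  obtain ⟨wp, hwpc, hwp⟩ := ComputablePred.computable_iff.1 hc
  have hwp' : ∀ w, wp w = true ↔ ev s w = 1 := fun w => by
    have := congrFun hwp w
    simp only [ev]
    rw [this]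
  have hsurj : ∀ g : G, ∃ w, ev s w = g := by
    intro g
    have hg : g ∈ Submonoid.closure (Set.range s) := by rw [hs]; trivial
    induction hg using Submonoid.closure_induction with
    | mem x hx =>
      obtain ⟨i, rfl⟩ := hx
      exact ⟨[i], by simp [ev]⟩
    | one => exact ⟨[], by simp [ev]⟩
    | mul x y _ _ hx hy =>
      obtain ⟨a, rfl⟩ := hx
      obtain ⟨b, rfl⟩ := hy
      exact ⟨a ++ b, ev_append s a b⟩
  choose wd hwd using hsurj
  have hact : IsEffClosedAction (freeAct s wd) (freeSys s) := by
    refine ⟨m + 1, fun i => ev s (gw i), isClosed_freeSys s, freeAct_isAction s wd hwd,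
      ⟨0, by simp [ev, gw]⟩, ?_, effClosed_setRep s wd hwd wp hwpc hwp'⟩
    rw [eq_top_iff, ← hs]
    refine Submonoid.closure_mono ?_
    rintro _ ⟨i, rfl⟩
    exact ⟨i.succ, by simp [ev, gw]⟩
  obtain ⟨k, Z, φ, hZ, _, hmaps, hsurjOn, hequiv⟩ := hss _ _ hact
  refine ⟨k, Z, hZ, ?_, ?_⟩
  · obtain ⟨x, hx⟩ := freeSys_nonempty s
    obtain ⟨z, hz, _⟩ := hsurjOn hx
    exact ⟨z, hz⟩
  · intro g x hx hgx
    have := hequiv g x hx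
    rw [hgx] at this
    exact free_of_fixed s wd hwd (hmaps hx) g this.symm


end SelfSim
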